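/- arXiv:2506.17932 — 3 statements merged into one kernel-verified Lean document; each statement's English description precedes it below -/
import Mathlib

section
/- Let X be a compact metric space, T: X → X a continuous map, A = (t_i)_{i≥1} a sequence of natural numbers, and μ a T-invariant Borel probability measure on X. Then the measure-theoretic sequence entropy satisfies h^A_μ(T) ≤ h^A_top(T). Consequently, sup_{μ ∈ M_T(X)} h^A_μ(T) ≤ h^A_top(T), where M_T(X) is the set of T-invariant Borel probability measures on X. -/
open Filter MeasureTheory

variable {X : Type*} [MetricSpace X]

/-- `spaN T F ε` : the minimal cardinality of a set `E ⊆ X` such that every `x ∈ X`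
satisfies `max_{i ∈ F} dist (T^[i] x) (T^[i] e) ≤ ε` for some `e ∈ E`. -/
noncomputable def spaN (T : X → X) (F : Finset ℕ) (ε : ℝ) : ℕ :=
  sInf {k : ℕ | ∃ E : Finset X, E.card = k ∧
    ∀ x : X, ∃ e ∈ E, ∀ i ∈ F, dist (T^[i] x) (T^[i] e) ≤ ε}

/-- Topological sequence entropy along the sequence `A = (t_i)_{i ≥ 1}`:
`h^A_top(T) = lim_{ε→0⁺} limsup_n (1/n) log spa(T,{t₁,…,t_n},ε)`
(the limit as `ε → 0⁺` of the antitone-in-`ε` quantity is its supremum over `ε > 0`). -/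
noncomputable def seqEntTop (T : X → X) (A : ℕ → ℕ) : EReal :=
  ⨆ (ε : ℝ) (_ : 0 < ε),
    Filter.limsup
      (fun n : ℕ =>
        ((Real.log (spaN T ((Finset.Icc 1 n).image A) ε) / n : ℝ) : EReal))
      Filter.atTop

/-- A finite measurable partition of `X`, modelled with atoms indexed by `Fin k`. -/
def IsMeasPartition {X : Type*} [MeasurableSpace X] {k : ℕ} (ξ : Fin k → Set X) : Prop :=
  (∀ i, MeasurableSet (ξ i)) ∧ Pairwise (Function.onFun Disjoint ξ) ∧ (⋃ i, ξ i) = Set.univ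

/-- `H(ξ^F)` : the Shannon entropy of the join `⋁_{i∈F} T^{−i}ξ`, whose atoms are the
intersections `⋂_{i∈F} T^{−i} ξ(g i)` over all choices `g`. -/
noncomputable def Hjoin {X : Type*} [MeasurableSpace X] (μ : Measure X) (T : X → X)
    (F : Finset ℕ) {k : ℕ} (ξ : Fin k → Set X) : ℝ :=
  ∑ g : {i // i ∈ F} → Fin k,
    Real.negMulLog (μ (⋂ i : {i // i ∈ F}, T^[(i : ℕ)] ⁻¹' ξ (g i))).toReal

/-- Measure-theoretic sequence entropy along `A = (t_i)_{i ≥ 1}`: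
`h^A_μ(T) = sup_ξ limsup_n (1/n) H(ξ^{{t₁,…,t_n}})`, the supremum over all finite
measurable partitions `ξ`. -/
noncomputable def seqEntMeas {X : Type*} [MeasurableSpace X] (μ : Measure X) (T : X → X)
    (A : ℕ → ℕ) : EReal :=
  ⨆ (k : ℕ) (ξ : Fin k → Set X) (_ : IsMeasPartition ξ),
    Filter.limsup
      (fun n : ℕ => ((Hjoin μ T ((Finset.Icc 1 n).image A) ξ / n : ℝ) : EReal))
      Filter.atTop

theorem gibbs {α : Type*} [Fintype α] (p q : α → ℝ) (hp : ∀ a, 0 ≤ p a) (hq : ∀ a, 0 < q a)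
    (h : ∑ a, q a ≤ ∑ a, p a) :
    ∑ a, Real.negMulLog (p a) ≤ ∑ a, p a * (- Real.log (q a)) := by
  have : ∀ a, Real.negMulLog (p a) ≤ p a * (- Real.log (q a)) + (q a - p a) := by
    intro a
    rcases (hp a).eq_or_lt with h0 | h0
    · simp [← h0, (hq a).le]
    · have := Real.log_le_sub_one_of_pos (div_pos (hq a) h0)
      rw [Real.log_div (hq a).ne' h0.ne'] at this
      have h2 := mul_le_mul_of_nonneg_left this h0.le
      have h3 : p a * (q a / p a - 1) = q a - p a := by field_simp
      rw [Real.negMulLog]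
      nlinarith
  calc _ ≤ ∑ a, (p a * (- Real.log (q a)) + (q a - p a)) := Finset.sum_le_sum fun a _ => this a
    _ ≤ _ := by
      rw [Finset.sum_add_distrib, Finset.sum_sub_distrib]; linarith

theorem spaN_spec [CompactSpace X] (T : X → X) (hT : Continuous T) (F : Finset ℕ) (ε : ℝ)
    (hε : 0 < ε) : ∃ E : Finset X, E.card = spaN T F ε ∧
    ∀ x : X, ∃ e ∈ E, ∀ i ∈ F, dist (T^[i] x) (T^[i] e) ≤ ε := by
  have hne : {k : ℕ | ∃ E : Finset X, E.card = k ∧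
    ∀ x : X, ∃ e ∈ E, ∀ i ∈ F, dist (T^[i] x) (T^[i] e) ≤ ε}.Nonempty := by
    obtain ⟨t, ht⟩ := isCompact_univ.elim_finite_subcover
      (fun e : X => ⋂ i ∈ F, {x | dist (T^[i] x) (T^[i] e) < ε})
      (fun e => isOpen_biInter_finset fun i _ => 
        isOpen_lt ((hT.iterate i).dist continuous_const) continuous_const)
      (fun x _ => by
        simp only [Set.mem_iUnion, Set.mem_iInter]
        exact ⟨x, fun i _ => by simpa using hε⟩)
    refine ⟨t.card, t, rfl, fun x => ?_⟩
    have := ht (Set.mem_univ x)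
    simp only [Set.mem_iUnion, Set.mem_iInter] at this
    obtain ⟨e, he, h⟩ := this
    exact ⟨e, he, fun i hi => (h i hi).le⟩
  exact Nat.sInf_mem hne

theorem key [MeasurableSpace X] [BorelSpace X] [CompactSpace X] [Nonempty X]
    (T : X → X) (hT : Continuous T)
    (μ : Measure X) [IsProbabilityMeasure μ] (hμ : MeasurePreserving T μ μ)
    {k : ℕ} (ξ : Fin k → Set X) (hξ : IsMeasPartition ξ) (η : ℝ) (hη : 0 < η) :
    ∃ ε : ℝ, 0 < ε ∧ ∀ F : Finset ℕ, Hjoin μ T F ξ ≤ Real.log (spaN T F ε) + F.card * η := by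
  obtain ⟨hm, hd, hU⟩ := hξ
  have hcov : ∀ x, ∃ j, x ∈ ξ j := fun x => by
    have : x ∈ ⋃ i, ξ i := hU ▸ Set.mem_univ x
    simpa using this
  have huniq : ∀ x i j, x ∈ ξ i → x ∈ ξ j → i = j := fun x i j hi hj => by
    by_contra hne
    exact Set.disjoint_left.1 (hd hne) hi hj
  obtain ⟨j0, -⟩ := hcov (Classical.arbitrary X)
  have hk : 1 ≤ k := j0.pos
  have hk' : (1:ℝ) ≤ k := by exact_mod_cast hk
  set δ : ℝ := 1 - Real.exp (-(η/2)) with hδ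
  have hδ1 : δ < 1 := by have := Real.exp_pos (-(η/2)); linarith
  have hδ0 : 0 < δ := by
    have : Real.exp (-(η/2)) < 1 := Real.exp_lt_one_iff.2 (by linarith)
    linarith
  have hδlog : Real.log (1 - δ) = -(η/2) := by
    rw [hδ]; simp
  set L : ℝ := Real.log (k / δ) with hL
  have hL0 : 0 ≤ L := Real.log_nonneg (by rw [le_div_iff₀ hδ0]; linarith)
  set r : ℝ := η / (2 * k * (L + 1)) with hr
  have hr0 : 0 < r := by positivity
  have hK : ∀ j, ∃ C ⊆ ξ j, IsClosed C ∧ μ (ξ j \ C) < ENNReal.ofReal r := fun j =>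
    (hm j).exists_isClosed_sdiff_lt (measure_ne_top _ _) (by simpa using hr0)
  choose C hCs hCc hCm using hK
  set K : Set X := ⋃ j, C j with hKdef
  have hKm : MeasurableSet K := MeasurableSet.iUnion fun j => (hCc j).measurableSet
  have hKμ : μ.real Kᶜ * L ≤ η / 2 := by
    have h1 : Kᶜ ⊆ ⋃ j, (ξ j \ C j) := by
      intro x hx
      obtain ⟨j, hj⟩ := hcov x
      exact Set.mem_iUnion.2 ⟨j, hj, fun h => hx (Set.mem_iUnion.2 ⟨j, h⟩)⟩
    have h2 : μ.real Kᶜ ≤ k * r := by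
      calc μ.real Kᶜ ≤ μ.real (⋃ j, (ξ j \ C j)) := measureReal_mono h1
        _ ≤ ∑ j, μ.real (ξ j \ C j) := measureReal_iUnion_fintype_le _
        _ ≤ ∑ j : Fin k, r := Finset.sum_le_sum fun j _ =>
            ENNReal.toReal_le_of_le_ofReal hr0.le (hCm j).le
        _ = k * r := by simp
    calc μ.real Kᶜ * L ≤ (k * r) * (L + 1) := by gcongr; linarith
      _ = η / 2 := by rw [hr]; field_simp
  -- Lebesgue number
  obtain ⟨ρ, hρ, hball⟩ := lebesgue_number_lemma_of_metric (isCompact_univ (X := X))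
    (c := fun i : Fin k => ⋂ j ∈ {j | j ≠ i}, (C j)ᶜ)
    (fun i => Set.Finite.isOpen_biInter (Set.toFinite _) fun j _ => (hCc j).isOpen_compl)
    (fun x _ => by
      obtain ⟨i, hi⟩ := hcov x
      refine Set.mem_iUnion.2 ⟨i, ?_⟩
      simp only [Set.mem_iInter]
      exact fun j hj h => hj (huniq x j i (hCs j h) hi))
  have hball' : ∀ x, ∃ i, ∀ y, dist y x < ρ → ∀ j, y ∈ C j → j = i := fun x => by
    obtain ⟨i, hi⟩ := hball x (Set.mem_univ x)
    refine ⟨i, fun y hy j hj => ?_⟩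
    by_contra hne
    have := hi (Metric.mem_ball.2 hy)
    simp only [Set.mem_iInter] at this
    exact this j hne hj
  choose c hc using hball'
  refine ⟨ρ/2, by linarith, fun F => ?_⟩
  obtain ⟨E, hEcard, hE⟩ := spaN_spec T hT F (ρ/2) (by linarith)
  rw [← hEcard]
  have hEne : E.Nonempty := by
    obtain ⟨e, he, -⟩ := hE (Classical.arbitrary X)
    exact ⟨e, he⟩
  have hN : (0:ℝ) < E.card := by exact_mod_cast hEne.card_pos
  set w : Fin k → Fin k → ℝ := fun a j => δ / k + if j = a then 1 - δ else 0 with hw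
  have hwpos : ∀ a j, δ / k ≤ w a j := fun a j => by
    simp only [hw]; split_ifs <;> linarith
  have hdk : 0 < δ / k := by positivity
  have hwp : ∀ a j, 0 < w a j := fun a j => hdk.trans_le (hwpos a j)
  have hwsum : ∀ a, ∑ j, w a j = 1 := fun a => by
    simp only [hw, Finset.sum_add_distrib, Finset.sum_const, Finset.card_univ, Fintype.card_fin,
      Finset.sum_ite_eq', Finset.sum_ite_eq, Finset.mem_univ, if_true, nsmul_eq_mul]
    field_simp; ring
  set q : ({i // i ∈ F} → Fin k) → ℝ := fun g =>
    (∑ b ∈ E, ∏ i : {i // i ∈ F}, w (c (T^[(i:ℕ)] b)) (g i)) / E.card with hq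
  have hqpos : ∀ g, 0 < q g := fun g =>
    div_pos (Finset.sum_pos (fun b _ => Finset.prod_pos fun i _ => hwp _ _) hEne) hN
  have hqsum : ∑ g, q g = 1 := by
    simp only [hq]
    rw [← Finset.sum_div, Finset.sum_comm]
    have : ∀ b ∈ E, ∑ g : {i // i ∈ F} → Fin k,
        ∏ i : {i // i ∈ F}, w (c (T^[(i:ℕ)] b)) (g i) = 1 := fun b _ => by
      have := Finset.prod_univ_sum (fun _ : {i // i ∈ F} => (Finset.univ : Finset (Fin k)))
        (fun i j => w (c (T^[(i:ℕ)] b)) j)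
      rw [Fintype.piFinset_univ] at this
      rw [← this]
      simp [hwsum]
    rw [Finset.sum_congr rfl this]
    simp [hN.ne']
  set Q : ({i // i ∈ F} → Fin k) → Set X := fun g =>
    ⋂ i : {i // i ∈ F}, T^[(i : ℕ)] ⁻¹' ξ (g i) with hQ
  have hQm : ∀ g, MeasurableSet (Q g) := fun g =>
    MeasurableSet.iInter fun i => (hT.measurable.iterate i) (hm _)
  have hQd : Pairwise (Function.onFun Disjoint Q) := by
    intro g g' hne
    refine Set.disjoint_left.2 fun x hx hx' => hne ?_
    funext i
    exact huniq _ _ _ (Set.mem_iInter.1 hx i) (Set.mem_iInter.1 hx' i)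
  have hQU : (⋃ g, Q g) = Set.univ := by
    refine Set.eq_univ_of_forall fun x => ?_
    choose f hf using hcov
    exact Set.mem_iUnion.2 ⟨fun i => f (T^[(i:ℕ)] x), Set.mem_iInter.2 fun i => hf _⟩
  set φ : X → ℝ := fun x => η / 2 + Kᶜ.indicator (fun _ => L) x with hφ
  have hφint : Integrable φ μ := (integrable_const _).add
    ((integrable_const _).indicator hKm.compl)
  have hφval : ∫ x, φ x ∂μ ≤ η := by
    rw [hφ, integral_add (integrable_const _) ((integrable_const _).indicator hKm.compl),
      integral_indicator_const _ hKm.compl]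
    simp only [integral_const, probReal_univ, smul_eq_mul]
    linarith
  set R : X → ℝ := fun x => Real.log E.card + ∑ i ∈ F, φ (T^[i] x) with hR
  have hmp : ∀ i, MeasurePreserving (T^[i]) μ μ := fun i => hμ.iterate i
  have hφi : ∀ i, Integrable (fun x => φ (T^[i] x)) μ := fun i =>
    (hmp i).integrable_comp_of_integrable hφint
  have hRint : Integrable R μ :=
    (integrable_const _).add (integrable_finsetSum _ fun i _ => hφi i)
  have hφI : ∀ i, ∫ x, φ (T^[i] x) ∂μ = ∫ x, φ x ∂μ := fun i => by
    have h := integral_map (μ := μ) (hmp i).measurable.aemeasurable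
      (f := φ) (by rw [(hmp i).map_eq]; exact hφint.1)
    rw [(hmp i).map_eq] at h
    exact h.symm
  have hRval : ∫ x, R x ∂μ ≤ Real.log E.card + F.card * η := by
    rw [hR, integral_add (integrable_const _) (integrable_finsetSum _ fun i _ => hφi i),
      integral_finsetSum _ fun i _ => hφi i]
    simp only [hφI, integral_const, probReal_univ, smul_eq_mul, Finset.sum_const, nsmul_eq_mul,
      one_mul]
    gcongr
  have hlogw : ∀ x e i, dist (T^[i] x) (T^[i] e) ≤ ρ/2 → ∀ j, T^[i] x ∈ ξ j →
      - Real.log (w (c (T^[i] e)) j) ≤ φ (T^[i] x) := by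
    intro x e i hdist j hj
    by_cases hx : T^[i] x ∈ K
    · obtain ⟨j', hj'⟩ := Set.mem_iUnion.1 hx
      have h1 : j' = j := huniq _ _ _ (hCs _ hj') hj
      have h2 : j' = c (T^[i] e) := hc _ _ (by linarith) _ hj'
      have h3 : 1 - δ ≤ w (c (T^[i] e)) j := by
        simp only [hw, ← h1, h2, if_true]; linarith
      have h4 := Real.log_le_log (by linarith) h3
      have h5 : φ (T^[i] x) = η / 2 := by simp [hφ, hx]
      rw [h5]; linarith
    · have h4 := Real.log_le_log hdk (hwpos (c (T^[i] e)) j)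
      have h5 : φ (T^[i] x) = η / 2 + L := by simp [hφ, hx]
      have h6 : Real.log (δ / k) = - L := by
        rw [hL, ← Real.log_inv, inv_div]
      rw [h5]; linarith
  have hpt : ∀ g, ∀ x ∈ Q g, - Real.log (q g) ≤ R x := by
    intro g x hx
    obtain ⟨e, he, hdist⟩ := hE x
    have h1 : (∏ i : {i // i ∈ F}, w (c (T^[(i:ℕ)] e)) (g i)) / E.card ≤ q g := by
      simp only [hq]
      gcongr
      exact Finset.single_le_sum (f := fun b => ∏ i : {i // i ∈ F}, w (c (T^[(i:ℕ)] b)) (g i))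
        (fun b _ => Finset.prod_nonneg fun i _ => (hwp _ _).le) he
    have hprod : 0 < ∏ i : {i // i ∈ F}, w (c (T^[(i:ℕ)] e)) (g i) :=
      Finset.prod_pos fun i _ => hwp _ _
    have h2 := Real.log_le_log (div_pos hprod hN) h1
    rw [Real.log_div hprod.ne' hN.ne', Real.log_prod (fun i _ => (hwp _ _).ne')] at h2
    have h3 : ∑ i : {i // i ∈ F}, - Real.log (w (c (T^[(i:ℕ)] e)) (g i))
        ≤ ∑ i ∈ F, φ (T^[i] x) := by
      rw [← Finset.sum_coe_sort F]
      exact Finset.sum_le_sum fun i _ => hlogw x e i (hdist i i.2) _ (Set.mem_iInter.1 hx i)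
    rw [Finset.sum_neg_distrib] at h3
    simp only [hR]
    linarith
  have hpsum : ∑ g, μ.real (Q g) = 1 := by
    rw [← measureReal_iUnion_fintype hQd hQm, hQU, probReal_univ]
  calc Hjoin μ T F ξ = ∑ g, Real.negMulLog (μ.real (Q g)) := rfl
    _ ≤ ∑ g, μ.real (Q g) * (- Real.log (q g)) :=
        gibbs _ _ (fun _ => measureReal_nonneg) hqpos (by rw [hqsum, hpsum])
    _ ≤ ∑ g, ∫ x in Q g, R x ∂μ := by
        refine Finset.sum_le_sum fun g _ => ?_
        have := setIntegral_mono_on (μ := μ) (s := Q g) (f := fun _ => - Real.log (q g)) (g := R)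
          (integrable_const _).integrableOn hRint.integrableOn (hQm g) (hpt g)
        simpa using this
    _ = ∫ x, R x ∂μ := by
        rw [← integral_iUnion_fintype hQm hQd (fun _ => hRint.integrableOn), hQU,
          Measure.restrict_univ]
    _ ≤ _ := hRval

theorem main_le [MeasurableSpace X] [BorelSpace X] [CompactSpace X] [Nonempty X]
    (T : X → X) (hT : Continuous T) (A : ℕ → ℕ)
    (μ : Measure X) [IsProbabilityMeasure μ] (hμ : MeasurePreserving T μ μ) :
    seqEntMeas μ T A ≤ seqEntTop T A := by
  refine iSup_le fun k => iSup_le fun ξ => iSup_le fun hξ => ?_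
  refine EReal.le_of_forall_lt_iff_le.1 fun z hz => ?_
  by_contra! hlt
  obtain ⟨z', hz'1, hz'2⟩ := EReal.lt_iff_exists_real_btwn.1 hlt
  have hzz : z < z' := by exact_mod_cast hz'1
  obtain ⟨ε, hε, H⟩ := key T hT μ hμ ξ hξ (z' - z) (by linarith)
  have h1 : Filter.limsup (fun n : ℕ =>
        ((Real.log (spaN T ((Finset.Icc 1 n).image A) ε) / n : ℝ) : EReal)) atTop < z :=
    lt_of_le_of_lt (le_iSup₂ (f := fun (ε : ℝ) (_ : 0 < ε) => Filter.limsup (fun n : ℕ =>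
        ((Real.log (spaN T ((Finset.Icc 1 n).image A) ε) / n : ℝ) : EReal)) atTop) ε hε) hz
  refine absurd hz'2 (not_lt.2 ?_)
  refine Filter.limsup_le_of_le (by isBoundedDefault) ?_
  filter_upwards [Filter.eventually_lt_of_limsup_lt h1, eventually_gt_atTop 0] with n hn hn0
  have hn' : Real.log (spaN T ((Finset.Icc 1 n).image A) ε) / n < z := by exact_mod_cast hn
  have hnpos : (0:ℝ) < n := by exact_mod_cast hn0
  have hcard : (((Finset.Icc 1 n).image A).card : ℝ) ≤ n := by
    have := Finset.card_image_le (s := Finset.Icc 1 n) (f := A)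
    simp only [Nat.card_Icc, Nat.add_sub_cancel] at this
    exact_mod_cast this
  have hH := H ((Finset.Icc 1 n).image A)
  have h2 := mul_le_mul_of_nonneg_right hcard (by linarith : 0 ≤ z' - z)
  rw [div_lt_iff₀ hnpos] at hn'
  have : Hjoin μ T ((Finset.Icc 1 n).image A) ξ / n ≤ z' := by
    rw [div_le_iff₀ hnpos]; linarith
  exact_mod_cast this

/-- For a continuous map `T` of a compact metric space `X`, a sequence `A`
of naturals and a `T`-invariant Borel probability measure `μ`, the measure-theoretic sequence
entropy is bounded by the topological sequence entropy; consequently the supremum over all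
invariant Borel probability measures is as well. -/
theorem stmt3 [MeasurableSpace X] [BorelSpace X] [CompactSpace X] [Nonempty X]
    (T : X → X) (hT : Continuous T) (A : ℕ → ℕ)
    (μ : Measure X) [IsProbabilityMeasure μ] (hμ : MeasurePreserving T μ μ) :
    seqEntMeas μ T A ≤ seqEntTop T A ∧
    (⨆ (μ' : Measure X) (_ : IsProbabilityMeasure μ' ∧ MeasurePreserving T μ' μ'),
        seqEntMeas μ' T A) ≤ seqEntTop T A := by
  refine ⟨main_le T hT A μ hμ, iSup_le fun μ' => iSup_le fun h => ?_⟩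
  have := h.1
  exact main_le T hT A μ' h.2
end

section
/- Let T be a homeomorphism of a compact metric space X with finite topological entropy h_top(T) < ∞, and fix m ∈ ℕ. Then for every ε > 0 there exist δ ∈ (0,ε) and n₀ ∈ ℕ such that: (1) (1/|F|) log spa(T,F,δ) ≤ C_m(F)·(h_top(T)+ε) for every finite F ⊂ ℤ with m-bounded gaps and |F| ≥ n₀; and (2) (1/|F|) log spa(T,F,δ) ≥ C_m(F)·(h_top(T)−ε) for every finite F ⊂ ℤ. -/
open Filter

variable {X : Type*} [MetricSpace X]

/-- `spaZ T F ε` : the minimal cardinality of a set `E ⊆ X` such that every `x ∈ X`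
satisfies `max_{i ∈ F} dist (T^i x, T^i e) ≤ ε` for some `e ∈ E`, where the iterates
`T^i`, `i ∈ ℤ`, are powers of the homeomorphism `T`. -/
noncomputable def spaZ (T : X ≃ₜ X) (F : Finset ℤ) (ε : ℝ) : ℕ :=
  sInf {k : ℕ | ∃ E : Finset X, E.card = k ∧
    ∀ x : X, ∃ e ∈ E, ∀ i ∈ F, dist ((T.toEquiv ^ i) x) ((T.toEquiv ^ i) e) ≤ ε}

/-- Topological entropy of a homeomorphism, via spanning sets:
`h_top(T) = lim_{ε→0⁺} limsup_n (1/n) log spa(T,{0,…,n−1},ε)`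
(the limit as `ε → 0⁺` of the antitone-in-`ε` quantity is its supremum over `ε > 0`). -/
noncomputable def htopZ (T : X ≃ₜ X) : EReal :=
  ⨆ (ε : ℝ) (_ : 0 < ε),
    Filter.limsup
      (fun n : ℕ =>
        ((Real.log (spaZ T (Finset.Icc 0 ((n : ℤ) - 1)) ε) / n : ℝ) : EReal))
      Filter.atTop

open Pointwise in
/-- `C_m(F) = |F + {0,…,m−1}| / |F|`. -/
noncomputable def Cm (m : ℕ) (F : Finset ℤ) : ℝ :=
  ((F + Finset.Icc (0 : ℤ) ((m : ℤ) - 1)).card : ℝ) / (F.card : ℝ)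

open Pointwise in
/-- `F` has `m`-bounded gaps if `F + {0,…,m−1}` is an interval of integers. -/
def BoundedGaps (m : ℕ) (F : Finset ℤ) : Prop :=
  ∃ a b : ℤ, F + Finset.Icc (0 : ℤ) ((m : ℤ) - 1) = Finset.Icc a b


section Shearer
open Classical

noncomputable def projC {ι β : Type*} (p : ℕ → ι → β) (A : Finset ι) (S : Finset ℕ) : ℕ :=
  (A.image (fun x (i : ℕ) => if i ∈ S then some (p i x) else none)).card

lemma projC_mono {ι β : Type*} (p : ℕ → ι → β) {A B : Finset ι} (h : A ⊆ B) (S : Finset ℕ) :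
    projC p A S ≤ projC p B S :=
  Finset.card_le_card (Finset.image_subset_image h)

lemma projC_insert {ι β : Type*} (p : ℕ → ι → β) (A : Finset ι) (S : Finset ℕ) (n : ℕ)
    (hn : n ∉ S) :
    projC p A (insert n S) = ∑ s ∈ A.image (p n), projC p (A.filter (fun x => p n x = s)) S := by
  unfold projC
  rw [Finset.card_eq_sum_card_fiberwise (f := fun φ : ℕ → Option β => φ n)
    (t := (A.image (p n)).image some)]
  · rw [Finset.sum_image (by intro a _ b _ h; exact Option.some.inj h)]
    refine Finset.sum_congr rfl fun s _ => ?_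
    apply Finset.card_bij (fun φ _ => Function.update φ n none)
    · intro φ hφ
      simp only [Finset.mem_filter, Finset.mem_image] at hφ ⊢
      obtain ⟨⟨x, hx, rfl⟩, h2⟩ := hφ
      refine ⟨x, ⟨hx, by simpa using h2⟩, ?_⟩
      funext i
      by_cases hi : i = n
      · subst hi; simp [hn]
      · simp [hi]
    · intro φ hφ ψ hψ h
      simp only [Finset.mem_filter] at hφ hψ
      funext i
      by_cases hi : i = n
      · subst hi; rw [hφ.2, hψ.2]
      · simpa [hi] using congrFun h i
    · intro φ hφ
      simp only [Finset.mem_filter, Finset.mem_image] at hφ ⊢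
      obtain ⟨x, ⟨hx, h2⟩, rfl⟩ := hφ
      refine ⟨_, ⟨⟨x, hx, rfl⟩, by simpa using h2⟩, ?_⟩
      funext i
      by_cases hi : i = n
      · subst hi; simp [hn]
      · simp [hi]
  · intro φ hφ
    simp only [Finset.coe_image, Set.mem_image, Finset.mem_coe] at hφ ⊢
    obtain ⟨x, hx, rfl⟩ := hφ
    exact ⟨_, ⟨x, hx, rfl⟩, by simp⟩

lemma holder_pow {σ τ : Type*} (V : Finset σ) (U : Finset τ) (hU : U.Nonempty) (C : ℝ)
    (b : σ → ℝ) (a : τ → σ → ℝ) (hC : 0 ≤ C) (hb : ∀ s ∈ V, 0 ≤ b s)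
    (ha : ∀ t ∈ U, ∀ s ∈ V, 0 ≤ a t s)
    (h : ∀ s ∈ V, b s ^ U.card ≤ C * ∏ t ∈ U, a t s) :
    (∑ s ∈ V, b s) ^ U.card ≤ C * ∏ t ∈ U, ∑ s ∈ V, a t s := by
  have hK : (U.card : ℝ) ≠ 0 := by exact_mod_cast hU.card_pos.ne'
  have hK' : U.card ≠ 0 := hU.card_pos.ne'
  by_cases hz : ∃ t ∈ U, ∑ s ∈ V, a t s = 0
  · obtain ⟨t, ht, h0⟩ := hz
    have hz := (Finset.sum_eq_zero_iff_of_nonneg (ha t ht)).1 h0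
    have : ∀ s ∈ V, b s = 0 := by
      intro s hs
      have h1 := h s hs
      rw [Finset.prod_eq_zero ht (hz s hs), mul_zero] at h1
      exact pow_eq_zero_iff hK' |>.1 (le_antisymm h1 (pow_nonneg (hb s hs) _))
    rw [Finset.sum_eq_zero this, zero_pow hK', Finset.prod_eq_zero ht h0, mul_zero]
  · push Not at hz
    have hpos : ∀ t ∈ U, 0 < ∑ s ∈ V, a t s := fun t ht =>
      lt_of_le_of_ne (Finset.sum_nonneg (ha t ht)) (Ne.symm (hz t ht))
    set A : τ → ℝ := fun t => ∑ s ∈ V, a t s with hA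
    have hPpos : 0 < ∏ t ∈ U, A t := Finset.prod_pos hpos
    set M : ℝ := (C * ∏ t ∈ U, A t) ^ ((U.card : ℝ)⁻¹) with hM
    have hM0 : 0 ≤ M := Real.rpow_nonneg (mul_nonneg hC hPpos.le) _
    have key : ∀ s ∈ V, b s ≤ M * ∑ t ∈ U, (U.card : ℝ)⁻¹ * (a t s / A t) := by
      intro s hs
      have e1 : b s ≤ (C * ∏ t ∈ U, a t s) ^ ((U.card : ℝ)⁻¹) := by
        rw [Real.le_rpow_inv_iff_of_pos (hb s hs)
          (mul_nonneg hC (Finset.prod_nonneg fun t ht => ha t ht s hs))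
          (by exact_mod_cast hU.card_pos), Real.rpow_natCast]
        exact h s hs
      have e2 : C * ∏ t ∈ U, a t s = (C * ∏ t ∈ U, A t) * ∏ t ∈ U, (a t s / A t) := by
        rw [Finset.prod_div_distrib]; field_simp
      rw [e2, Real.mul_rpow (mul_nonneg hC hPpos.le)
        (Finset.prod_nonneg fun t ht => div_nonneg (ha t ht s hs) (hpos t ht).le)] at e1
      refine e1.trans (mul_le_mul_of_nonneg_left ?_ hM0)
      rw [← Real.finsetProd_rpow _ _ (fun t ht => div_nonneg (ha t ht s hs) (hpos t ht).le)]
      apply Real.geom_mean_le_arith_mean_weighted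
      · intros; positivity
      · rw [Finset.sum_const, nsmul_eq_mul]; exact mul_inv_cancel₀ hK
      · exact fun t ht => div_nonneg (ha t ht s hs) (hpos t ht).le
    have hsum : ∑ s ∈ V, b s ≤ M := by
      refine (Finset.sum_le_sum key).trans ?_
      rw [← Finset.mul_sum, Finset.sum_comm]
      have : ∑ t ∈ U, ∑ s ∈ V, (U.card : ℝ)⁻¹ * (a t s / A t) = 1 := by
        rw [Finset.sum_congr rfl (g := fun _ => (U.card : ℝ)⁻¹)]
        · rw [Finset.sum_const, nsmul_eq_mul]; exact mul_inv_cancel₀ hK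
        · intro t ht
          rw [← Finset.mul_sum, ← Finset.sum_div, div_self (hz t ht), mul_one]
      rw [this, mul_one]
    calc (∑ s ∈ V, b s) ^ U.card ≤ M ^ U.card := pow_le_pow_left₀ (Finset.sum_nonneg hb) hsum _
      _ = _ := Real.rpow_inv_natCast_pow (mul_nonneg hC hPpos.le) hK'

lemma shearer {ι β τ : Type*} (p : ℕ → ι → β) (I : Finset τ) (S : τ → Finset ℕ) (K : ℕ)
    (hK : 0 < K) (n : ℕ) : ∀ (_ : ∀ i < n, (I.filter (fun t => i ∈ S t)).card = K)
    (A : Finset ι), A.Nonempty → 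
    (projC p A (Finset.range n) : ℝ) ^ K ≤ ∏ t ∈ I, (projC p A (S t ∩ Finset.range n) : ℝ) := by
  induction n with
  | zero =>
    intro _ A hA
    have : projC p A ∅ = 1 := by
      unfold projC
      simp [Finset.image_const hA]
    simp [this]
  | succ n ih =>
    intro hc A hA
    have hin : ∀ t, n ∈ S t → S t ∩ Finset.range (n+1) = insert n (S t ∩ Finset.range n) := by
      intro t ht; ext i; simp only [Finset.mem_inter, Finset.mem_range, Finset.mem_insert]
      constructor
      · rintro ⟨h1, h2⟩
        by_cases hi : i = n
        · exact Or.inl hi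
        · exact Or.inr ⟨h1, by omega⟩
      · rintro (rfl | ⟨h1, h2⟩)
        · exact ⟨ht, by omega⟩
        · exact ⟨h1, by omega⟩
    have hout : ∀ t, n ∉ S t → S t ∩ Finset.range (n+1) = S t ∩ Finset.range n := by
      intro t ht; ext i; simp only [Finset.mem_inter, Finset.mem_range]
      constructor
      · rintro ⟨h1, h2⟩
        refine ⟨h1, ?_⟩
        have : i ≠ n := by rintro rfl; exact ht h1
        omega
      · rintro ⟨h1, h2⟩
        exact ⟨h1, by omega⟩
    have hcn := hc n (by omega)
    rw [← Finset.prod_filter_mul_prod_filter_not I (fun t => n ∈ S t), mul_comm,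
      Finset.range_add_one, projC_insert _ _ _ _ (by simp)]
    rw [Finset.prod_congr rfl (g := fun t => ∑ s ∈ A.image (p n), 
      (projC p (A.filter (fun x => p n x = s)) (S t ∩ Finset.range n) : ℝ)) (s₁ := I.filter (fun t => n ∈ S t))]
    · push_cast
      rw [← hcn]
      apply holder_pow
      · rw [← Finset.card_pos, hcn]; exact hK
      · positivity
      · intros; positivity
      · intros; positivity
      · intro s hs
        rw [hcn]
        obtain ⟨x, hx, hxs⟩ := Finset.mem_image.1 hs
        refine (ih (fun i hi => hc i (by omega)) _ ⟨x, by simp [hx, hxs]⟩).trans ?_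
        rw [← Finset.prod_filter_mul_prod_filter_not I (fun t => n ∈ S t), mul_comm]
        refine mul_le_mul_of_nonneg_right ?_ (by positivity)
        refine Finset.prod_le_prod (by intros; positivity) ?_
        intro t ht
        rw [← Finset.range_add_one, hout t (Finset.mem_filter.1 ht).2]
        exact_mod_cast projC_mono p (Finset.filter_subset _ _) _
    · intro t ht
      rw [← Finset.range_add_one, hin t (Finset.mem_filter.1 ht).2, projC_insert _ _ _ _ (by simp)]
      push_cast; rfl

end Shearer

section Counting
open Classical

lemma counting {ι τ Y : Type*} {k : ℕ} (E : Finset ι) (n : ℕ) (p : ℕ → ι → Fin k)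
    (Bad : ℕ → ι → Prop)
    (hinj : ∀ x ∈ E, ∀ y ∈ E, (∀ i < n, p i x = p i y) → x = y)
    (I : Finset τ) (S : τ → Finset ℕ) (K : ℕ) (hK : 0 < K)
    (hc : ∀ i < n, (I.filter (fun t => i ∈ S t)).card = K)
    (EG : Finset Y) (e : τ → ι → Y) (he : ∀ t x, e t x ∈ EG)
    (hdet : ∀ t ∈ I, ∀ i ∈ S t, ∀ x ∈ E, ∀ y ∈ E, e t x = e t y → ¬ Bad i x → ¬ Bad i y →
      p i x = p i y) (b c : ℝ)
    (hbad : ∑ x ∈ E, (((Finset.range n).filter (fun i => Bad i x)).card : ℝ) ≤ b * E.card)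
    (hc0 : 0 ≤ c) (hN : 1 ≤ EG.card) :
    (E.card : ℝ) * Real.exp (-c * b) ≤
      (EG.card : ℝ) ^ ((I.card : ℝ) / K) * (1 + k * Real.exp (-c)) ^ n := by
  set Z : ι → Fin n → Option (Fin k) := fun x i => if Bad i x then some (p i x) else none with hZ
  set w : Option (Fin k) → ℝ := fun o => o.elim 1 (fun _ => Real.exp (-c)) with hw
  set M : ℝ := (EG.card : ℝ) ^ ((I.card : ℝ) / K) with hM
  have hw0 : ∀ o, 0 ≤ w o := by
    intro o; cases o <;> simp [hw, Real.exp_nonneg]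
  have hM0 : 0 ≤ M := by positivity
  have h1 : ∀ x, ∏ i, w (Z x i) =
      Real.exp (-c * ((Finset.range n).filter (fun i => Bad i x)).card) := by
    intro x
    have : ∏ i, w (Z x i) = ∏ i ∈ Finset.range n, (if Bad i x then Real.exp (-c) else 1) := by
      rw [Finset.prod_range]
      refine Finset.prod_congr rfl fun i _ => ?_
      by_cases hb : Bad i x <;> simp [hZ, hw, hb]
    rw [this, Finset.prod_ite, Finset.prod_const, Finset.prod_const_one, mul_one, ← Real.exp_nat_mul,
      mul_comm]
  -- lower bound
  have h2 : (E.card : ℝ) * Real.exp (-c * b) ≤ ∑ x ∈ E, ∏ i, w (Z x i) := by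
    have : ∀ x ∈ E, Real.exp (-c * b) * (1 + (c * b - 
        c * ((Finset.range n).filter (fun i => Bad i x)).card)) ≤ ∏ i, w (Z x i) := by
      intro x _
      rw [h1]
      have h3 := Real.add_one_le_exp (c * b - c * ((Finset.range n).filter (fun i => Bad i x)).card)
      calc _ ≤ Real.exp (-c * b) * Real.exp (c * b - 
            c * ((Finset.range n).filter (fun i => Bad i x)).card) := by
            apply mul_le_mul_of_nonneg_left _ (Real.exp_nonneg _); linarith
        _ = _ := by rw [← Real.exp_add]; congr 1; ring
    refine le_trans ?_ (Finset.sum_le_sum this)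
    rw [← Finset.mul_sum, Finset.sum_add_distrib, Finset.sum_sub_distrib, ← Finset.mul_sum,
      Finset.sum_const, Finset.sum_const, mul_comm]
    apply mul_le_mul_of_nonneg_left _ (Real.exp_nonneg _)
    simp only [nsmul_eq_mul]
    rw [← Finset.mul_sum]
    nlinarith [mul_le_mul_of_nonneg_left hbad hc0]
  -- each class is small
  have h3 : ∀ z : Fin n → Option (Fin k), ((E.filter (fun x => Z x = z)).card : ℝ) ≤ M := by
    intro z
    rcases (E.filter (fun x => Z x = z)).eq_empty_or_nonempty with h0 | hne
    · rw [h0]; simpa using hM0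
    set A := E.filter (fun x => Z x = z) with hA
    have s1 := shearer p I S K hK n hc A hne
    have s2 : projC p A (Finset.range n) = A.card := by
      unfold projC
      apply Finset.card_image_of_injOn
      intro x hx y hy hxy
      simp only [hA, Finset.coe_filter, Set.mem_ofPred_eq] at hx hy
      apply hinj x hx.1 y hy.1
      intro i hi
      simpa [hi] using congrFun hxy i
    have s3 : ∀ t ∈ I, (projC p A (S t ∩ Finset.range n) : ℝ) ≤ EG.card := by
      intro t ht
      have : projC p A (S t ∩ Finset.range n) ≤ (A.image (e t)).card := by
        unfold projC
        have hf : ∀ x ∈ A, ∀ y ∈ A, e t x = e t y → 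
            (fun (i : ℕ) => if i ∈ S t ∩ Finset.range n then some (p i x) else none) =
            (fun (i : ℕ) => if i ∈ S t ∩ Finset.range n then some (p i y) else none) := by
          intro x hx y hy hxy
          funext i
          by_cases hi : i ∈ S t ∩ Finset.range n
          · simp only [hi, if_true]
            simp only [Finset.mem_inter, Finset.mem_range] at hi
            simp only [hA, Finset.mem_filter] at hx hy
            have hz : Z x ⟨i, hi.2⟩ = Z y ⟨i, hi.2⟩ := by rw [hx.2, hy.2]
            simp only [hZ] at hz
            by_cases b1 : Bad i x <;> by_cases b2 : Bad i y
            · simpa [b1, b2] using hz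
            · simp [b1, b2] at hz
            · simp [b1, b2] at hz
            · rw [hdet t ht i hi.1 x hx.1 y hy.1 hxy b1 b2]
          · simp only [hi, if_false]
        have hg : ∀ u, ∃ φ : ℕ → Option (Fin k), ∀ x ∈ A, e t x = u →
            (fun (i : ℕ) => if i ∈ S t ∩ Finset.range n then some (p i x) else none) = φ := by
          intro u
          by_cases hu : ∃ x ∈ A, e t x = u
          · obtain ⟨x, hx, hxu⟩ := hu
            exact ⟨_, fun y hy hyu => hf y hy x hx (hyu.trans hxu.symm)⟩
          · exact ⟨fun _ => none, fun x hx hxu => absurd ⟨x, hx, hxu⟩ hu⟩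
        choose g hg using hg
        calc _ ≤ ((A.image (e t)).image g).card := by
              apply Finset.card_le_card
              intro φ hφ
              obtain ⟨x, hx, rfl⟩ := Finset.mem_image.1 hφ
              rw [hg _ x hx rfl]
              exact Finset.mem_image_of_mem _ (Finset.mem_image_of_mem _ hx)
          _ ≤ _ := Finset.card_image_le
      refine Nat.cast_le.2 (this.trans (Finset.card_le_card ?_))
      intro u hu
      obtain ⟨x, _, rfl⟩ := Finset.mem_image.1 hu
      exact he t x
    have s4 : (A.card : ℝ) ^ K ≤ (EG.card : ℝ) ^ I.card := by
      rw [← s2]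
      refine s1.trans ((Finset.prod_le_prod (by intros; positivity) s3).trans ?_)
      rw [Finset.prod_const]
    rw [hM, div_eq_mul_inv, Real.rpow_mul (by positivity), Real.rpow_natCast,
      Real.le_rpow_inv_iff_of_pos (by positivity) (by positivity) (by exact_mod_cast hK),
      Real.rpow_natCast]
    exact s4
  refine h2.trans ?_
  have h4 : ∑ x ∈ E, ∏ i, w (Z x i) =
      ∑ z : Fin n → Option (Fin k), ((E.filter (fun x => Z x = z)).card : ℝ) * ∏ i, w (z i) := by
    rw [← Finset.sum_fiberwise_of_maps_to (g := Z) (t := Finset.univ) (fun _ _ => Finset.mem_univ _)]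
    refine Finset.sum_congr rfl fun z _ => ?_
    rw [Finset.sum_congr rfl (g := fun _ => ∏ i, w (z i)), Finset.sum_const, nsmul_eq_mul]
    intro x hx
    rw [(Finset.mem_filter.1 hx).2]
  rw [h4]
  calc _ ≤ ∑ z : Fin n → Option (Fin k), M * ∏ i, w (z i) := by
        refine Finset.sum_le_sum fun z _ => mul_le_mul_of_nonneg_right (h3 z) ?_
        exact Finset.prod_nonneg fun i _ => hw0 _
    _ = _ := by
        rw [← Finset.mul_sum]
        congr 1
        have := Finset.prod_univ_sum (fun _ : Fin n => (Finset.univ : Finset (Option (Fin k)))) (fun _ o => w o)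
        rw [Fintype.piFinset_univ] at this
        rw [← this, Finset.prod_const, Finset.card_univ, Fintype.card_fin, Fintype.sum_option]
        simp [hw]

end Counting

section Dyn

lemma contZ (T : X ≃ₜ X) (i : ℤ) : Continuous (fun x => (T.toEquiv ^ i) x) := by
  induction i using Int.induction_on with
  | zero => exact continuous_id
  | succ n ih =>
    have : (fun x => (T.toEquiv ^ ((n : ℤ) + 1)) x) = fun x => (T.toEquiv ^ (n : ℤ)) (T x) := by
      funext x; rw [zpow_add_one]; rfl
    rw [this]; exact ih.comp T.continuous
  | pred n ih =>
    have : (fun x => (T.toEquiv ^ (-(n : ℤ) - 1)) x) =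
        fun x => (T.toEquiv ^ (-(n : ℤ))) (T.symm x) := by
      funext x; rw [zpow_sub_one]; rfl
    rw [this]; exact ih.comp T.symm.continuous

lemma zadd (T : X ≃ₜ X) (i j : ℤ) (x : X) :
    (T.toEquiv ^ (i + j)) x = (T.toEquiv ^ i) ((T.toEquiv ^ j) x) := by
  rw [zpow_add]; rfl

lemma spa_exists [CompactSpace X] (T : X ≃ₜ X) (F : Finset ℤ) {ε : ℝ} (hε : 0 < ε) :
    ∃ E : Finset X, ∀ x : X, ∃ e ∈ E, ∀ i ∈ F,
      dist ((T.toEquiv ^ i) x) ((T.toEquiv ^ i) e) ≤ ε := by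
  obtain ⟨E, hE⟩ := CompactSpace.elim_nhds_subcover
    (fun e : X => ⋂ i ∈ F, {x | dist ((T.toEquiv ^ i) x) ((T.toEquiv ^ i) e) < ε}) (by
      intro e
      rw [Filter.biInter_finset_mem]
      intro i _
      refine IsOpen.mem_nhds ?_ (by simpa using hε)
      exact isOpen_lt ((contZ T i).dist continuous_const) continuous_const)
  refine ⟨E, fun x => ?_⟩
  have : x ∈ ⋃ e ∈ E, ⋂ i ∈ F, {x | dist ((T.toEquiv ^ i) x) ((T.toEquiv ^ i) e) < ε} := by
    rw [hE]; trivial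
  simp only [Set.mem_iUnion, Set.mem_iInter] at this
  obtain ⟨e, he, h⟩ := this
  exact ⟨e, he, fun i hi => le_of_lt (h i hi)⟩

lemma spa_spec [CompactSpace X] (T : X ≃ₜ X) (F : Finset ℤ) {ε : ℝ} (hε : 0 < ε) :
    ∃ E : Finset X, E.card = spaZ T F ε ∧ ∀ x : X, ∃ e ∈ E, ∀ i ∈ F,
      dist ((T.toEquiv ^ i) x) ((T.toEquiv ^ i) e) ≤ ε := by
  obtain ⟨E, hE⟩ := spa_exists T F hε
  exact Nat.sInf_mem (s := {k : ℕ | ∃ E : Finset X, E.card = k ∧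
    ∀ x : X, ∃ e ∈ E, ∀ i ∈ F, dist ((T.toEquiv ^ i) x) ((T.toEquiv ^ i) e) ≤ ε}) ⟨_, E, rfl, hE⟩

lemma spa_le (T : X ≃ₜ X) (F : Finset ℤ) {ε : ℝ} (E : Finset X)
    (hE : ∀ x : X, ∃ e ∈ E, ∀ i ∈ F,
      dist ((T.toEquiv ^ i) x) ((T.toEquiv ^ i) e) ≤ ε) : spaZ T F ε ≤ E.card :=
  Nat.sInf_le ⟨E, rfl, hE⟩

lemma spa_pos [CompactSpace X] [Nonempty X] (T : X ≃ₜ X) (F : Finset ℤ) {ε : ℝ} (hε : 0 < ε) :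
    1 ≤ spaZ T F ε := by
  obtain ⟨E, h1, h2⟩ := spa_spec T F hε
  rw [← h1]
  obtain ⟨e, he, _⟩ := h2 (Classical.arbitrary X)
  exact Finset.card_pos.2 ⟨e, he⟩

lemma sep_exists (T : X ≃ₜ X) (F : Finset ℤ) {ε : ℝ} (hε : 0 ≤ ε) (j : ℕ) (hj : j ≤ spaZ T F ε) :
    ∃ E : Finset X, E.card = j ∧ ∀ x ∈ E, ∀ y ∈ E,
      (∀ i ∈ F, dist ((T.toEquiv ^ i) x) ((T.toEquiv ^ i) y) ≤ ε) → x = y := by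
  classical
  induction j with
  | zero => exact ⟨∅, by simp⟩
  | succ j ih =>
    obtain ⟨E, h1, h2⟩ := ih (by omega)
    have : ¬ ∀ x : X, ∃ e ∈ E, ∀ i ∈ F, dist ((T.toEquiv ^ i) x) ((T.toEquiv ^ i) e) ≤ ε := by
      intro h
      have := spa_le T F E h
      omega
    push Not at this
    obtain ⟨x, hx⟩ := this
    have hxE : x ∉ E := by
      intro hxE
      obtain ⟨i, hi, hh⟩ := hx x hxE
      rw [dist_self] at hh
      linarith
    · refine ⟨insert x E, by rw [Finset.card_insert_of_notMem hxE, h1], ?_⟩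
      intro a ha b hb hab
      rw [Finset.mem_insert] at ha hb
      rcases ha with rfl | ha <;> rcases hb with rfl | hb
      · rfl
      · obtain ⟨i, hi, hh⟩ := hx b hb
        exact absurd (hab i hi) (not_le.2 hh)
      · obtain ⟨i, hi, hh⟩ := hx a ha
        have := hab i hi
        rw [dist_comm] at this
        exact absurd this (not_le.2 hh)
      · exact h2 a ha b hb hab

lemma band_good {s δ d d' : ℝ} {l : ℕ} (hδ : 0 < δ) (h : ⌊(d - s / 4) / (2 * δ)⌋ ≠ (l : ℤ))
    (hd : |d - d'| ≤ δ) :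
    d < s / 4 + (2 * l + 1) * δ ↔ d' < s / 4 + (2 * l + 1) * δ := by
  rw [Ne, Int.floor_eq_iff, le_div_iff₀ (by positivity), div_lt_iff₀ (by positivity), not_and_or,
    not_le, not_lt] at h
  push_cast at h
  rw [abs_le] at hd
  rcases h with h | h
  · constructor <;> intro _ <;> nlinarith
  · constructor <;> intro _ <;> nlinarith

open Classical in
lemma key_s10 [CompactSpace X] [Nonempty X] (T : X ≃ₜ X) {s γ : ℝ} (hs : 0 < s) (hγ : 0 < γ) :
    ∃ δ : ℝ, 0 < δ ∧ ∀ G : Finset ℤ, G.Nonempty → ∃ D : ℕ, ∀ n : ℕ,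
      Real.log (spaZ T (Finset.Icc 0 ((n : ℤ) - 1)) s) ≤
        ((n : ℝ) + 2 * D) / G.card * Real.log (spaZ T G δ) + n * γ := by
  obtain ⟨C, hC⟩ := spa_exists T {0} (ε := s / 8) (by positivity)
  have hCne : C.Nonempty := by
    obtain ⟨e, he, _⟩ := hC (Classical.arbitrary X); exact ⟨e, he⟩
  set k := C.card with hk
  have hk0 : 0 < k := hCne.card_pos
  have hkr : (0 : ℝ) < k := by exact_mod_cast hk0
  set c : Fin k → X := fun j => (C.equivFin.symm j : X) with hc
  have hcov : ∀ x, ∃ j, dist x (c j) < s / 4 := by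
    intro x
    obtain ⟨e, he, h⟩ := hC x
    refine ⟨C.equivFin ⟨e, he⟩, ?_⟩
    have := h 0 (by simp)
    simp only [zpow_zero, Equiv.Perm.coe_one, id] at this
    simp only [hc, Equiv.symm_apply_apply]
    linarith
  set cc : ℝ := 2 * k / γ with hcc
  have hcc0 : 0 < cc := by positivity
  have hccb : k * Real.exp (-cc) ≤ γ / 2 := by
    rw [Real.exp_neg]
    have : cc ≤ Real.exp cc := by linarith [Real.add_one_le_exp cc]
    calc k * (Real.exp cc)⁻¹ ≤ k * cc⁻¹ := by gcongr
      _ = γ / 2 := by rw [hcc]; field_simp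
  obtain ⟨R, hR⟩ := exists_nat_gt (2 * cc * k / γ)
  have hRr : (0 : ℝ) < R := lt_of_le_of_lt (by positivity) hR
  have hR0 : 0 < R := by exact_mod_cast hRr
  have hRb : cc * (k / R) ≤ γ / 2 := by
    rw [div_lt_iff₀ hγ] at hR
    rw [← mul_div_assoc, div_le_iff₀ hRr]; linarith
  set δ : ℝ := s / (8 * R) with hδd
  have hδ : 0 < δ := by positivity
  have hδR : 2 * R * δ = s / 4 := by rw [hδd]; field_simp; norm_num
  refine ⟨δ, hδ, fun G hG => ?_⟩
  obtain ⟨EG, hEG, hspan⟩ := spa_spec T G hδ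
  refine ⟨∑ g ∈ G, g.natAbs, fun n => ?_⟩
  set D := ∑ g ∈ G, g.natAbs with hD
  have hGD : ∀ g ∈ G, -(D : ℤ) ≤ g ∧ g ≤ D := by
    intro g hg
    have : g.natAbs ≤ D := Finset.single_le_sum (f := fun g : ℤ => g.natAbs) (by simp) hg
    omega
  obtain ⟨E, hE, hsep⟩ := sep_exists T (Finset.Icc 0 ((n : ℤ) - 1)) hs.le _ le_rfl
  set band : ℕ → X → Fin k → ℤ := fun i x j =>
    ⌊(dist ((T.toEquiv ^ (i : ℤ)) x) (c j) - s / 4) / (2 * δ)⌋ with hband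
  have hl : ∀ j, ∃ l : ℕ, l < R ∧
      ∑ x ∈ E, (((Finset.range n).filter (fun i => band i x j = (l : ℤ))).card : ℝ)
        ≤ n * E.card / R := by
    intro j
    by_contra hcon
    push Not at hcon
    have h1 : ∑ l ∈ Finset.range R, (n * E.card / R : ℝ) < ∑ l ∈ Finset.range R, 
        ∑ x ∈ E, (((Finset.range n).filter (fun i => band i x j = (l : ℤ))).card : ℝ) :=
      Finset.sum_lt_sum_of_nonempty (by simpa using hR0.ne')
        (fun l hl => hcon l (Finset.mem_range.1 hl))
    rw [Finset.sum_comm, Finset.sum_const, nsmul_eq_mul, Finset.card_range] at h1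
    have h2 : ∀ x ∈ E, ∑ l ∈ Finset.range R, 
        (((Finset.range n).filter (fun i => band i x j = (l : ℤ))).card : ℝ) ≤ n := by
      intro x _
      rw [← Nat.cast_sum, ← Finset.card_biUnion]
      · refine Nat.cast_le.2 ((Finset.card_le_card (t := Finset.range n) ?_).trans (by simp))
        intro i hi
        simp only [Finset.mem_biUnion, Finset.mem_filter] at hi
        obtain ⟨_, _, h, _⟩ := hi
        exact h
      · intro l _ l' _ hll
        refine Finset.disjoint_left.2 fun i hi hi' => hll ?_
        have a1 := (Finset.mem_filter.1 hi).2
        have a2 := (Finset.mem_filter.1 hi').2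
        exact_mod_cast a1.symm.trans a2
    have h3 := Finset.sum_le_sum h2
    rw [Finset.sum_const, nsmul_eq_mul] at h3
    have : (R : ℝ) * (n * E.card / R) = n * E.card := by field_simp
    rw [this] at h1
    linarith
  choose l hlR hlb using hl
  set r : Fin k → ℝ := fun j => s / 4 + (2 * l j + 1) * δ with hr
  have hr1 : ∀ j, s / 4 < r j := by intro j; simp only [hr]; have : 0 < (2 * (l j : ℝ) + 1) * δ := by positivity
                                    linarith
  have hr2 : ∀ j, r j ≤ s / 2 := by
    intro j
    have : (l j : ℝ) + 1 ≤ R := by exact_mod_cast hlR j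
    simp only [hr]; nlinarith
  obtain ⟨sel, hsel⟩ : ∃ sel : Set (Fin k) → Fin k, ∀ S, S.Nonempty → sel S ∈ S := by
    refine ⟨fun S => if h : S.Nonempty then h.some else ⟨0, hk0⟩, fun S h => ?_⟩
    simp only [h, dif_pos]; exact h.some_mem
  set P : X → Fin k := fun x => sel {j | dist x (c j) < r j} with hP
  have hPm : ∀ x, dist x (c (P x)) < r (P x) := by
    intro x
    apply hsel {j | dist x (c j) < r j}
    obtain ⟨j, hj⟩ := hcov x
    exact ⟨j, hj.trans (hr1 j)⟩
  choose e he1 he2 using hspan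
  have hPgood : ∀ i x y, (¬ ∃ j, band i x j = (l j : ℤ)) → 
      dist ((T.toEquiv ^ (i : ℤ)) x) y ≤ δ → P ((T.toEquiv ^ (i : ℤ)) x) = P y := by
    intro i x y hb hd
    simp only [hP]
    congr 1
    ext j
    push Not at hb
    exact band_good hδ (hb j) ((abs_dist_sub_le _ _ _).trans hd)
  have hbad : ∑ x ∈ E, (((Finset.range n).filter (fun i => ∃ j, band i x j = (l j : ℤ))).card : ℝ)
      ≤ k * n / R * E.card := by
      calc ∑ x ∈ E, (((Finset.range n).filter (fun i => ∃ j, band i x j = (l j : ℤ))).card : ℝ)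
          ≤ ∑ x ∈ E, ∑ j, (((Finset.range n).filter (fun i => band i x j = (l j : ℤ))).card : ℝ) := by
            refine Finset.sum_le_sum fun x _ => ?_
            rw [← Nat.cast_sum]
            refine Nat.cast_le.2 ((Finset.card_le_card ?_).trans (Finset.card_biUnion_le (s := Finset.univ)))
            intro i hi
            obtain ⟨h1, j, h2⟩ := Finset.mem_filter.1 hi
            exact Finset.mem_biUnion.2 ⟨j, Finset.mem_univ _, Finset.mem_filter.2 ⟨h1, h2⟩⟩
        _ = ∑ j, ∑ x ∈ E, (((Finset.range n).filter (fun i => band i x j = (l j : ℤ))).card : ℝ) :=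
            Finset.sum_comm
        _ ≤ ∑ j : Fin k, (n * E.card / R : ℝ) := Finset.sum_le_sum fun j _ => hlb j
        _ = k * n / R * E.card := by
            rw [Finset.sum_const, nsmul_eq_mul, Finset.card_univ, Fintype.card_fin]; ring
  have main := counting E n (fun i x => P ((T.toEquiv ^ (i : ℤ)) x))
    (fun i x => ∃ j, band i x j = (l j : ℤ)) (by
      intro x hx y hy hxy
      apply hsep x hx y hy
      intro i hi
      rw [Finset.mem_Icc] at hi
      lift i to ℕ using hi.1
      have h1 := hPm ((T.toEquiv ^ (i : ℤ)) x)
      have h2 := hPm ((T.toEquiv ^ (i : ℤ)) y)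
      rw [← hxy i (by omega)] at h2
      have h3 := hr2 (P ((T.toEquiv ^ (i : ℤ)) x))
      have h4 := dist_triangle_right ((T.toEquiv ^ (i : ℤ)) x) ((T.toEquiv ^ (i : ℤ)) y) (c (P ((T.toEquiv ^ (i : ℤ)) x)))
      linarith)
    (Finset.Icc (-(D : ℤ)) ((n : ℤ) - 1 + D))
    (fun t => (Finset.range n).filter (fun i => (i : ℤ) - t ∈ G)) G.card hG.card_pos (by
      intro i hi
      apply Finset.card_bij (fun t _ => (i : ℤ) - t)
      · intro t ht
        simp only [Finset.mem_filter] at ht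
        exact ht.2.2
      · intro a _ b _ h; omega
      · intro g hg
        have := hGD g hg
        refine ⟨(i : ℤ) - g, ?_, by ring⟩
        simp only [Finset.mem_filter, Finset.mem_Icc, Finset.mem_range, sub_sub_cancel]
        refine ⟨⟨by omega, by omega⟩, hi, hg⟩)
    EG (fun t x => e ((T.toEquiv ^ t) x)) (fun t x => he1 _) (by
      intro t _ i hi x _ y _ hxy b1 b2
      have hi := (Finset.mem_filter.1 hi).2
      have d1 := he2 ((T.toEquiv ^ t) x) _ hi
      have d2 := he2 ((T.toEquiv ^ t) y) _ hi
      rw [← zadd, sub_add_cancel] at d1 d2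
      rw [← hxy] at d2
      exact (hPgood i x _ b1 d1).trans (hPgood i y _ b2 d2).symm)
    (k * n / R) cc (by
convert hbad)
    hcc0.le (by rw [hEG]; exact spa_pos T G hδ)
  have hE1 : (0 : ℝ) < E.card := by rw [hE]; exact_mod_cast spa_pos T _ hs
  have hEG1 : (0 : ℝ) < EG.card := by rw [hEG]; exact_mod_cast spa_pos T _ hδ
  have hlog := Real.log_le_log (by positivity) main
  have h1k : 0 < 1 + k * Real.exp (-cc) := by positivity
  rw [Real.log_mul hE1.ne' (Real.exp_pos _).ne', Real.log_exp,
    Real.log_mul (Real.rpow_pos_of_pos hEG1 _).ne' (pow_pos h1k _).ne', Real.log_rpow hEG1,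
    Real.log_pow, hE, hEG] at hlog
  have hI : ((Finset.Icc (-(D : ℤ)) ((n : ℤ) - 1 + D)).card : ℝ) = n + 2 * D := by
    rw [Int.card_Icc]
    have : ((n : ℤ) - 1 + D + 1 - -(D : ℤ)).toNat = n + 2 * D := by omega
    rw [this]; push_cast; ring
  rw [hI] at hlog
  have h5 : Real.log (1 + k * Real.exp (-cc)) ≤ γ / 2 := by
    have := Real.log_le_sub_one_of_pos h1k; linarith
  have h6 : (n : ℝ) * Real.log (1 + k * Real.exp (-cc)) ≤ n * (γ / 2) := by gcongr
  have h7 : cc * (k * n / R) ≤ n * (γ / 2) := by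
    calc cc * (k * n / R) = n * (cc * (k / R)) := by ring
      _ ≤ _ := by gcongr
  linarith

end Dyn

section Final

lemma unif_fin [CompactSpace X] (T : X ≃ₜ X) (I : Finset ℤ) {r : ℝ} (hr : 0 < r) :
    ∃ δ : ℝ, 0 < δ ∧ ∀ x y : X, dist x y ≤ δ → ∀ i ∈ I,
      dist ((T.toEquiv ^ i) x) ((T.toEquiv ^ i) y) ≤ r := by
  classical
  induction I using Finset.induction_on with
  | empty => exact ⟨1, one_pos, by simp⟩
  | insert a I _ ih =>
    obtain ⟨δ₁, h1, h2⟩ := ih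
    obtain ⟨δ₂, h3, h4⟩ := Metric.uniformContinuous_iff.1
      (CompactSpace.uniformContinuous_of_continuous (contZ T a)) r hr
    refine ⟨min δ₁ (δ₂ / 2), by positivity, fun x y hxy i hi => ?_⟩
    rcases Finset.mem_insert.1 hi with rfl | hi
    · refine (h4 ?_).le
      have := hxy.trans (min_le_right _ _)
      linarith
    · exact h2 x y (hxy.trans (min_le_left _ _)) i hi

lemma spa_interval [CompactSpace X] (T : X ≃ₜ X) (F : Finset ℤ) {δ : ℝ} (hδ : 0 < δ) (a : ℤ)
    (n : ℕ) (hF : ∀ i ∈ F, a ≤ i ∧ i ≤ a + n - 1) :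
    spaZ T F δ ≤ spaZ T (Finset.Icc 0 ((n : ℤ) - 1)) δ := by
  classical
  obtain ⟨E, h1, h2⟩ := spa_spec T (Finset.Icc 0 ((n : ℤ) - 1)) hδ
  rw [← h1]
  refine (spa_le T F (E.image (fun x => (T.toEquiv ^ (-a)) x)) ?_).trans Finset.card_image_le
  intro x
  obtain ⟨e, he, h⟩ := h2 ((T.toEquiv ^ a) x)
  refine ⟨_, Finset.mem_image_of_mem _ he, fun i hi => ?_⟩
  have := h (i - a) (by have := hF i hi; rw [Finset.mem_Icc]; omega)
  rw [← zadd, sub_add_cancel] at this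
  rw [← zadd, ← sub_eq_add_neg]
  exact this

open Pointwise in
lemma spa_add [CompactSpace X] (T : X ≃ₜ X) (F I : Finset ℤ) {δ r : ℝ} (hδ : 0 < δ)
    (h : ∀ x y : X, dist x y ≤ δ → ∀ i ∈ I,
      dist ((T.toEquiv ^ i) x) ((T.toEquiv ^ i) y) ≤ r) :
    spaZ T (F + I) r ≤ spaZ T F δ := by
  obtain ⟨E, h1, h2⟩ := spa_spec T F hδ
  rw [← h1]
  refine spa_le T _ E fun x => ?_
  obtain ⟨e, he, h3⟩ := h2 x
  refine ⟨e, he, fun i hi => ?_⟩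
  obtain ⟨f, hf, j, hj, rfl⟩ := Finset.mem_add.1 hi
  rw [add_comm, zadd, zadd]
  exact h _ _ (h3 f hf) j hj

lemma htop_lower [CompactSpace X] [Nonempty X] (T : X ≃ₜ X) (a : ℝ) (ha : (a : EReal) < htopZ T)
    {γ : ℝ} (hγ : 0 < γ) : ∃ δ : ℝ, 0 < δ ∧ ∀ G : Finset ℤ, G.Nonempty →
      (G.card : ℝ) * (a - γ) ≤ Real.log (spaZ T G δ) := by
  unfold htopZ at ha
  simp only [lt_iSup_iff] at ha
  obtain ⟨s, hs, hlim⟩ := ha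
  obtain ⟨δ, hδ, hk⟩ := key_s10 T hs hγ
  refine ⟨δ, hδ, fun G hG => ?_⟩
  obtain ⟨D, hD⟩ := hk G hG
  have hG0 : (0 : ℝ) < G.card := by exact_mod_cast hG.card_pos
  have hfr := frequently_lt_of_lt_limsup (by isBoundedDefault) hlim
  set L := Real.log (spaZ T G δ) with hL
  have hfr2 : ∃ᶠ n : ℕ in atTop, a ≤ L / G.card + (2 * D * L / G.card) / n + γ := by
    refine (hfr.and_eventually (eventually_gt_atTop 0)).mono ?_
    rintro n ⟨h1, h2⟩
    have hn : (0 : ℝ) < n := by exact_mod_cast h2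
    have h1 := EReal.coe_lt_coe_iff.1 h1
    refine h1.le.trans ?_
    rw [div_le_iff₀ hn]
    refine (hD n).trans (le_of_eq ?_)
    field_simp
  have ht : Tendsto (fun n : ℕ => L / G.card + (2 * D * L / G.card) / n + γ) atTop
      (nhds (L / G.card + 0 + γ)) :=
    (tendsto_const_nhds.add (tendsto_const_div_atTop_nhds_zero_nat _)).add tendsto_const_nhds
  have := ge_of_tendsto_of_frequently ht hfr2
  have h3 : a - γ ≤ L / G.card := by linarith
  rw [le_div_iff₀ hG0] at h3
  linarith

end Final

/-- Let `T` be a homeomorphism of a compact metric space with finite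
topological entropy and fix `m ≥ 1`. For every `ε > 0` there are `δ ∈ (0,ε)` and `n₀` with:
(1) `(1/|F|) log spa(T,F,δ) ≤ C_m(F)·(h_top(T)+ε)` for every finite `F ⊆ ℤ` with
`m`-bounded gaps and `|F| ≥ n₀`; (2) `(1/|F|) log spa(T,F,δ) ≥ C_m(F)·(h_top(T)−ε)`
for every finite `F ⊆ ℤ`. -/
theorem stmt10 [CompactSpace X] [Nonempty X] (T : X ≃ₜ X) (m : ℕ) (hm : 1 ≤ m)
    (hfin : htopZ T < ⊤) (ε : ℝ) (hε : 0 < ε) :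
    ∃ δ : ℝ, 0 < δ ∧ δ < ε ∧ ∃ n₀ : ℕ,
      (∀ F : Finset ℤ, BoundedGaps m F → n₀ ≤ F.card →
        Real.log (spaZ T F δ) / (F.card : ℝ) ≤ Cm m F * ((htopZ T).toReal + ε)) ∧
      (∀ F : Finset ℤ,
        Cm m F * ((htopZ T).toReal - ε) ≤ Real.log (spaZ T F δ) / (F.card : ℝ)) := by
  open Pointwise in
    classical
    have hnonneg : (0 : EReal) ≤ htopZ T := by
      refine le_trans ?_ (le_iSup₂ (f := fun (s : ℝ) (_ : 0 < s) => Filter.limsup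
        (fun n : ℕ =>
          ((Real.log (spaZ T (Finset.Icc 0 ((n : ℤ) - 1)) s) / n : ℝ) : EReal))
        Filter.atTop) 1 one_pos)
      refine le_limsup_of_frequently_le (Frequently.of_forall fun n => ?_) (by isBoundedDefault)
      exact EReal.coe_nonneg.2 (div_nonneg (Real.log_natCast_nonneg _) (Nat.cast_nonneg _))
    have hcoe : ((htopZ T).toReal : EReal) = htopZ T :=
      EReal.coe_toReal hfin.ne (fun h => by rw [h] at hnonneg; simp at hnonneg)
    set h := (htopZ T).toReal with hh
    obtain ⟨δ₁, hδ₁, hlow⟩ := htop_lower T (h - ε / 2)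
      (by rw [← hcoe]; exact EReal.coe_lt_coe_iff.2 (by linarith)) (half_pos hε)
    obtain ⟨δ₂, hδ₂, hu⟩ := unif_fin T (Finset.Icc (0 : ℤ) ((m : ℤ) - 1)) hδ₁
    set δ := min δ₂ (ε / 2) with hδd
    have hδ : 0 < δ := by positivity
    have hup : ∀ᶠ n : ℕ in atTop,
        ((Real.log (spaZ T (Finset.Icc 0 ((n : ℤ) - 1)) δ) / n : ℝ) : EReal) < ((h + ε : ℝ) : EReal) := by
      refine eventually_lt_of_limsup_lt ?_ (by isBoundedDefault)
      refine lt_of_le_of_lt (le_iSup₂ (f := fun (s : ℝ) (_ : 0 < s) => Filter.limsup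
        (fun n : ℕ =>
          ((Real.log (spaZ T (Finset.Icc 0 ((n : ℤ) - 1)) s) / n : ℝ) : EReal))
        Filter.atTop) δ hδ) ?_
      change htopZ T < _
      rw [← hcoe]; exact EReal.coe_lt_coe_iff.2 (by linarith)
    obtain ⟨N, hN⟩ := eventually_atTop.1 hup
    refine ⟨δ, hδ, (min_le_right _ _).trans_lt (half_lt_self hε), N + 1, ?_, ?_⟩
    · rintro F ⟨a, b, hab⟩ hF
      have hF0 : (0 : ℝ) < F.card := by exact_mod_cast (by omega : 0 < F.card)
      have hsub : F ⊆ Finset.Icc a b := by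
        rw [← hab]
        intro i hi
        exact Finset.mem_add.2 ⟨i, hi, 0, by rw [Finset.mem_Icc]; omega, add_zero i⟩
      have hcard := Finset.card_le_card hsub
      unfold Cm
      rw [hab, div_mul_eq_mul_div]
      set n := (Finset.Icc a b).card with hn
      have hn1 : (n : ℤ) = b - a + 1 := by
        rw [Int.card_Icc] at hn
        omega
      have hn0 : (0 : ℝ) < n := by exact_mod_cast (by omega : 0 < n)
      have h1 := EReal.coe_lt_coe_iff.1 (hN n (by omega))
      rw [div_lt_iff₀ hn0] at h1
      have h2 := spa_interval T F hδ a n (fun i hi => by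
        have := Finset.mem_Icc.1 (hsub hi); omega)
      have h3 : Real.log (spaZ T F δ) ≤ Real.log (spaZ T (Finset.Icc 0 ((n : ℤ) - 1)) δ) :=
        Real.log_le_log (by exact_mod_cast spa_pos T F hδ) (by exact_mod_cast h2)
      exact div_le_div_of_nonneg_right (by linarith) hF0.le
    · intro F
      unfold Cm
      rcases F.eq_empty_or_nonempty with rfl | hF
      · simp
      rw [div_mul_eq_mul_div]
      refine div_le_div_of_nonneg_right ?_ (Nat.cast_nonneg _)
      have h1 := hlow (F + Finset.Icc (0 : ℤ) ((m : ℤ) - 1))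
        (hF.add ⟨0, by rw [Finset.mem_Icc]; omega⟩)
      have h2 := spa_add T F (Finset.Icc (0 : ℤ) ((m : ℤ) - 1)) (r := δ₁) hδ
        (fun x y hxy => hu x y (hxy.trans (min_le_left _ _)))
      have h3 : Real.log (spaZ T (F + Finset.Icc (0 : ℤ) ((m : ℤ) - 1)) δ₁) ≤
          Real.log (spaZ T F δ) :=
        Real.log_le_log (by exact_mod_cast spa_pos T _ hδ₁) (by exact_mod_cast h2)
      have h4 : h - ε / 2 - ε / 2 = h - ε := by ring
      rw [h4] at h1
      exact h1.trans h3
end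

section
/- Let (T^t)_{t∈ℝ} be a continuous flow on a compact metric space X. Then for every scale a, the upper (respectively lower) topological slow entropy of the flow equals the upper (respectively lower) topological slow entropy of its time-one map T¹. -/
open Filter

variable {X : Type*} [MetricSpace X]

/-- Upper topological slow entropy with respect to a scale `a`, given the spanning numbers
`spa ε n` for the time interval of length `n`:
`ent̄_a = lim_{ε→0⁺} sup({0} ∪ {t > 0 : limsup_n spa(ε,n)/a_n(t) > 0})`
(the limit as `ε → 0⁺` of the antitone-in-`ε` quantity is its supremum over `ε > 0`). -/
noncomputable def upperSlow (spa : ℝ → ℕ → ℕ) (a : ℕ → ℝ → ℝ) : EReal :=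
  ⨆ (ε : ℝ) (_ : 0 < ε),
    sSup (insert (0 : EReal) {x : EReal | ∃ t : ℝ, 0 < t ∧ x = (t : EReal) ∧
      0 < Filter.limsup
            (fun n : ℕ => (((spa ε n : ℝ) / a n t : ℝ) : EReal)) Filter.atTop})

/-- Lower topological slow entropy with respect to a scale `a`. -/
noncomputable def lowerSlow (spa : ℝ → ℕ → ℕ) (a : ℕ → ℝ → ℝ) : EReal :=
  ⨆ (ε : ℝ) (_ : 0 < ε),
    sSup (insert (0 : EReal) {x : EReal | ∃ t : ℝ, 0 < t ∧ x = (t : EReal) ∧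
      0 < Filter.liminf
            (fun n : ℕ => (((spa ε n : ℝ) / a n t : ℝ) : EReal)) Filter.atTop})

/-- `spaFlow T n ε` : spanning numbers of a flow `(T^t)_{t∈ℝ}` for the Bowen metric over
the compact interval `[0, n−1]`. -/
noncomputable def spaFlow (T : ℝ → X → X) (n : ℕ) (ε : ℝ) : ℕ :=
  sInf {k : ℕ | ∃ E : Finset X, E.card = k ∧
    ∀ x : X, ∃ e ∈ E, ∀ t ∈ Set.Icc (0 : ℝ) ((n : ℝ) - 1), dist (T t x) (T t e) ≤ ε}

theorem upperSlow_mono_aux (s1 s2 : ℝ → ℕ → ℕ) (a : ℕ → ℝ → ℝ)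
    (hpos : ∀ n : ℕ, ∀ t : ℝ, 0 < t → 0 < a n t)
    (h : ∀ ε : ℝ, 0 < ε → ∃ δ : ℝ, 0 < δ ∧ ∀ n, s1 ε n ≤ s2 δ n) :
    upperSlow s1 a ≤ upperSlow s2 a := by
  unfold upperSlow
  refine iSup₂_le fun ε hε => ?_
  obtain ⟨δ, hδ, hs⟩ := h ε hε
  refine le_iSup₂_of_le δ hδ (sSup_le_sSup ?_)
  refine Set.insert_subset_insert ?_
  rintro x ⟨t, ht, hx, hlim⟩
  refine ⟨t, ht, hx, lt_of_lt_of_le hlim ?_⟩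
  refine Filter.limsup_le_limsup (Filter.Eventually.of_forall fun n => ?_)
  refine EReal.coe_le_coe_iff.2 ?_
  exact div_le_div_of_nonneg_right (by exact_mod_cast hs n) (hpos n t ht).le

theorem lowerSlow_mono_aux (s1 s2 : ℝ → ℕ → ℕ) (a : ℕ → ℝ → ℝ)
    (hpos : ∀ n : ℕ, ∀ t : ℝ, 0 < t → 0 < a n t)
    (h : ∀ ε : ℝ, 0 < ε → ∃ δ : ℝ, 0 < δ ∧ ∀ n, s1 ε n ≤ s2 δ n) :
    lowerSlow s1 a ≤ lowerSlow s2 a := by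
  unfold lowerSlow
  refine iSup₂_le fun ε hε => ?_
  obtain ⟨δ, hδ, hs⟩ := h ε hε
  refine le_iSup₂_of_le δ hδ (sSup_le_sSup ?_)
  refine Set.insert_subset_insert ?_
  rintro x ⟨t, ht, hx, hlim⟩
  refine ⟨t, ht, hx, lt_of_lt_of_le hlim ?_⟩
  refine Filter.liminf_le_liminf (Filter.Eventually.of_forall fun n => ?_)
  refine EReal.coe_le_coe_iff.2 ?_
  exact div_le_div_of_nonneg_right (by exact_mod_cast hs n) (hpos n t ht).le

theorem exists_span_aux {X : Type*} [MetricSpace X] [CompactSpace X] (S : X → X)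
    (hS : Continuous S) (F : Finset ℕ) (δ : ℝ) (hδ : 0 < δ) :
    ∃ E : Finset X, ∀ x : X, ∃ e ∈ E, ∀ i ∈ F, dist (S^[i] x) (S^[i] e) ≤ δ := by
  obtain ⟨E, hE⟩ := isCompact_univ.elim_finite_subcover
    (fun e : X => ⋂ i ∈ F, {x : X | dist (S^[i] x) (S^[i] e) < δ})
    (fun e => isOpen_biInter_finset fun i _ =>
      isOpen_lt ((hS.iterate i).dist continuous_const) continuous_const)
    (fun x _ => Set.mem_iUnion.2 ⟨x, by simp [hδ]⟩)
  refine ⟨E, fun x => ?_⟩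
  have hx := hE (Set.mem_univ x)
  simp only [Set.mem_iUnion, Set.mem_iInter, Set.mem_setOf_eq] at hx
  obtain ⟨e, he, h⟩ := hx
  exact ⟨e, he, fun i hi => (h i hi).le⟩

theorem iterate_flow_aux {X : Type*} (T : ℝ → X → X) (hzero : T 0 = id)
    (hadd : ∀ t s : ℝ, T (t + s) = T t ∘ T s) (i : ℕ) : (T 1)^[i] = T (i : ℝ) := by
  induction i with
  | zero => simp [hzero]
  | succ k ih => rw [Function.iterate_succ, ih, ← hadd]; push_cast; rfl

theorem unif_flow_aux {X : Type*} [MetricSpace X] [CompactSpace X] (T : ℝ → X → X)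
    (hcont : Continuous fun p : ℝ × X => T p.1 p.2) (ε : ℝ) (hε : 0 < ε) :
    ∃ δ : ℝ, 0 < δ ∧ ∀ x y : X, dist x y ≤ δ →
      ∀ s ∈ Set.Icc (0 : ℝ) 1, dist (T s x) (T s y) ≤ ε := by
  have hK : IsCompact (Set.Icc (0 : ℝ) 1 ×ˢ (Set.univ : Set X)) :=
    isCompact_Icc.prod isCompact_univ
  have hu := hK.uniformContinuousOn_of_continuous hcont.continuousOn
  obtain ⟨δ, hδ, h⟩ := Metric.uniformContinuousOn_iff.1 hu ε hε
  refine ⟨δ / 2, by positivity, fun x y hxy s hs => ?_⟩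
  refine (h (s, x) ⟨hs, trivial⟩ (s, y) ⟨hs, trivial⟩ ?_).le
  simp only [Prod.dist_eq, dist_self]
  exact max_lt hδ (by linarith)

theorem disc_to_flow_aux {X : Type*} [MetricSpace X] (T : ℝ → X → X) (hzero : T 0 = id)
    (hadd : ∀ t s : ℝ, T (t + s) = T t ∘ T s) (ε δ : ℝ)
    (h : ∀ x y : X, dist x y ≤ δ → ∀ s ∈ Set.Icc (0 : ℝ) 1, dist (T s x) (T s y) ≤ ε)
    (n : ℕ) (x e : X)
    (hx : ∀ i ∈ Finset.range n, dist ((T 1)^[i] x) ((T 1)^[i] e) ≤ δ) :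
    ∀ t ∈ Set.Icc (0 : ℝ) ((n : ℝ) - 1), dist (T t x) (T t e) ≤ ε := by
  rintro t ⟨h0, h1⟩
  have hf := Nat.floor_le h0
  have hl := Nat.lt_floor_add_one t
  have hi : ⌊t⌋₊ ∈ Finset.range n := by
    rw [Finset.mem_range]
    have : (⌊t⌋₊ : ℝ) < n := by linarith
    exact_mod_cast this
  have := h _ _ (hx _ hi) (t - ⌊t⌋₊) ⟨by linarith, by linarith⟩
  rw [iterate_flow_aux T hzero hadd, ← Function.comp_apply (f := T (t - ⌊t⌋₊)),
    ← Function.comp_apply (f := T (t - ⌊t⌋₊)) (x := e), ← hadd] at this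
  simpa using this

/-- For a continuous flow `(T^t)_{t∈ℝ}` on a compact metric space and any
scale `a`, the upper (resp. lower) topological slow entropy of the flow equals the upper
(resp. lower) topological slow entropy of its time-one map. -/
theorem stmt19 [CompactSpace X] [Nonempty X]
    (T : ℝ → X → X)
    (hcont : Continuous fun p : ℝ × X => T p.1 p.2)
    (hzero : T 0 = id)
    (hadd : ∀ t s : ℝ, T (t + s) = T t ∘ T s)
    (hhomeo : ∀ t : ℝ, ∃ h : X ≃ₜ X, ⇑h = T t)
    (a : ℕ → ℝ → ℝ)
    (hpos : ∀ n : ℕ, ∀ t : ℝ, 0 < t → 0 < a n t)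
    (hmono : ∀ t : ℝ, 0 < t → Monotone fun n => a n t)
    (htop' : ∀ t : ℝ, 0 < t → Filter.Tendsto (fun n => a n t) Filter.atTop Filter.atTop)
    (hmonot : ∀ n : ℕ, ∀ t₁ t₂ : ℝ, 0 < t₁ → t₁ ≤ t₂ → a n t₁ ≤ a n t₂) :
    upperSlow (fun ε n => spaFlow T n ε) a
      = upperSlow (fun ε n => spaN (T 1) (Finset.range n) ε) a ∧
    lowerSlow (fun ε n => spaFlow T n ε) a
      = lowerSlow (fun ε n => spaN (T 1) (Finset.range n) ε) a := by
  have hT1 : Continuous (T 1) := hcont.comp (continuous_const.prodMk continuous_id)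
  have key1 : ∀ ε : ℝ, 0 < ε → ∃ δ : ℝ, 0 < δ ∧
      ∀ n, spaFlow T n ε ≤ spaN (T 1) (Finset.range n) δ := by
    intro ε hε
    obtain ⟨δ, hδ, h⟩ := unif_flow_aux T hcont ε hε
    refine ⟨δ, hδ, fun n => ?_⟩
    obtain ⟨E₀, hE₀⟩ := exists_span_aux (T 1) hT1 (Finset.range n) δ hδ
    obtain ⟨E, hc, hE⟩ := Nat.sInf_mem (s := {k : ℕ | ∃ E : Finset X, E.card = k ∧
      ∀ x : X, ∃ e ∈ E, ∀ i ∈ Finset.range n, dist ((T 1)^[i] x) ((T 1)^[i] e) ≤ δ})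
      ⟨_, E₀, rfl, hE₀⟩
    refine Nat.sInf_le ⟨E, hc, fun x => ?_⟩
    obtain ⟨e, he, hx⟩ := hE x
    exact ⟨e, he, disc_to_flow_aux T hzero hadd ε δ h n x e hx⟩
  have key2 : ∀ ε : ℝ, 0 < ε → ∃ δ : ℝ, 0 < δ ∧
      ∀ n, spaN (T 1) (Finset.range n) ε ≤ spaFlow T n δ := by
    intro ε hε
    refine ⟨ε, hε, fun n => ?_⟩
    obtain ⟨δ, hδ, h⟩ := unif_flow_aux T hcont ε hε
    obtain ⟨E₀, hE₀⟩ := exists_span_aux (T 1) hT1 (Finset.range n) δ hδ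
    obtain ⟨E, hc, hE⟩ := Nat.sInf_mem (s := {k : ℕ | ∃ E : Finset X, E.card = k ∧
      ∀ x : X, ∃ e ∈ E, ∀ t ∈ Set.Icc (0 : ℝ) ((n : ℝ) - 1), dist (T t x) (T t e) ≤ ε})
      ⟨_, E₀, rfl, fun x => by
        obtain ⟨e, he, hx⟩ := hE₀ x
        exact ⟨e, he, disc_to_flow_aux T hzero hadd ε δ h n x e hx⟩⟩
    refine Nat.sInf_le ⟨E, hc, fun x => ?_⟩
    obtain ⟨e, he, hx⟩ := hE x
    refine ⟨e, he, fun i hi => ?_⟩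
    rw [iterate_flow_aux T hzero hadd]
    refine hx i ⟨Nat.cast_nonneg i, ?_⟩
    have : ((i + 1 : ℕ) : ℝ) ≤ n := Nat.cast_le.2 (Finset.mem_range.1 hi)
    push_cast at this
    linarith
  exact ⟨le_antisymm (upperSlow_mono_aux _ _ a hpos key1) (upperSlow_mono_aux _ _ a hpos key2),
    le_antisymm (lowerSlow_mono_aux _ _ a hpos key1) (lowerSlow_mono_aux _ _ a hpos key2)⟩
end
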